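/- For any X5-interpretation ⟨H,T⟩ and any nested expression F: (i) ⟨H,T⟩ ⊨ F if and only if H ⊨ F^T, and (ii) ⟨H,T⟩ ⫤ F if and only if H ⫤ F^T. -/

import Mathlib

open scoped Classical

namespace X5Paper

/-- Explicit literals: an atom `p` or its explicit negation `∼p`. -/
inductive XLit (At : Type) : Type
  | pos : At → XLit At
  | neg : At → XLit At

/-- A set of explicit literals is consistent if it contains no atom together
with its explicit negation. -/
def Consistent {At : Type} (T : Set (XLit At)) : Prop :=
  ∀ p : At, ¬ (XLit.pos p ∈ T ∧ XLit.neg p ∈ T)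

/-- Nested expressions: ⊤, ⊥, atoms, ∧, ∨, default negation ¬, explicit negation ∼. -/
inductive NExp (At : Type) : Type
  | top : NExp At
  | bot : NExp At
  | atom : At → NExp At
  | conj : NExp At → NExp At → NExp At
  | disj : NExp At → NExp At → NExp At
  | dneg : NExp At → NExp At
  | xneg : NExp At → NExp At

variable {At : Type}

mutual
/-- Satisfaction `T ⊨ F` of a nested expression by a set of explicit literals. -/
def NExp.sat (T : Set (XLit At)) : NExp At → Prop
  | .top => True
  | .bot => False
  | .atom p => XLit.pos p ∈ T
  | .conj F G => NExp.sat T F ∧ NExp.sat T G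
  | .disj F G => NExp.sat T F ∨ NExp.sat T G
  | .dneg F => ¬ NExp.sat T F
  | .xneg F => NExp.fals T F

/-- Falsification `T ⫤ F` of a nested expression by a set of explicit literals. -/
def NExp.fals (T : Set (XLit At)) : NExp At → Prop
  | .top => False
  | .bot => True
  | .atom p => XLit.neg p ∈ T
  | .conj F G => NExp.fals T F ∨ NExp.fals T G
  | .disj F G => NExp.fals T F ∧ NExp.fals T G
  | .dneg F => NExp.sat T F
  | .xneg F => NExp.sat T F
end

/-- The reduct `F^T` of a nested expression. -/
noncomputable def NExp.reduct (T : Set (XLit At)) : NExp At → NExp At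
  | .top => .top
  | .bot => .bot
  | .atom p => .atom p
  | .conj F G => .conj (NExp.reduct T F) (NExp.reduct T G)
  | .disj F G => .disj (NExp.reduct T F) (NExp.reduct T G)
  | .dneg F => if NExp.sat T F then .bot else .top
  | .xneg F => .xneg (NExp.reduct T F)

/-- Formulas: atoms, ⊥, ∧, ∨, →, explicit negation ∼. -/
inductive Frm (At : Type) : Type
  | atom : At → Frm At
  | bot : Frm At
  | conj : Frm At → Frm At → Frm At
  | disj : Frm At → Frm At → Frm At
  | impl : Frm At → Frm At → Frm At
  | xneg : Frm At → Frm At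

/-- Default negation `¬φ := φ → ⊥`. -/
def Frm.neg (φ : Frm At) : Frm At := Frm.impl φ Frm.bot

/-- `⊤ := ¬⊥`. -/
def Frm.top : Frm At := Frm.neg Frm.bot

/-- Weak equivalence `φ ↔ ψ := (φ→ψ) ∧ (ψ→φ)`. -/
def Frm.iff (φ ψ : Frm At) : Frm At := Frm.conj (Frm.impl φ ψ) (Frm.impl ψ φ)

/-- Strong equivalence connective `φ ⇔ ψ := (φ↔ψ) ∧ (∼φ↔∼ψ)`. -/
def Frm.siff (φ ψ : Frm At) : Frm At :=
  Frm.conj (Frm.iff φ ψ) (Frm.iff (Frm.xneg φ) (Frm.xneg ψ))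

mutual
/-- X5 satisfaction `⟨H,T⟩ ⊨ φ`. -/
def Sat : Set (XLit At) → Set (XLit At) → Frm At → Prop
  | H, _, .atom p => XLit.pos p ∈ H
  | _, _, .bot => False
  | H, T, .conj φ ψ => Sat H T φ ∧ Sat H T ψ
  | H, T, .disj φ ψ => Sat H T φ ∨ Sat H T ψ
  | H, T, .impl φ ψ => (Sat H T φ → Sat H T ψ) ∧ (Sat T T φ → Sat T T ψ)
  | H, T, .xneg φ => Fals H T φ

/-- X5 falsification `⟨H,T⟩ ⫤ φ`. -/
def Fals : Set (XLit At) → Set (XLit At) → Frm At → Prop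
  | H, _, .atom p => XLit.neg p ∈ H
  | _, _, .bot => True
  | H, T, .conj φ ψ => Fals H T φ ∨ Fals H T ψ
  | H, T, .disj φ ψ => Fals H T φ ∧ Fals H T ψ
  | H, T, .impl φ ψ => Sat T T φ ∧ Fals H T ψ
  | H, T, .xneg φ => Sat H T φ
end

/-- X5 validity: satisfied by every X5-interpretation `⟨H,T⟩`. -/
def X5Valid (φ : Frm At) : Prop :=
  ∀ H T : Set (XLit At), Consistent H → Consistent T → H ⊆ T → Sat H T φ

/-- Nested expressions viewed as formulas (`¬F := F → ⊥`, `⊤ := ¬⊥`). -/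
def NExp.toFrm : NExp At → Frm At
  | .top => Frm.top
  | .bot => .bot
  | .atom p => .atom p
  | .conj F G => .conj F.toFrm G.toFrm
  | .disj F G => .disj F.toFrm G.toFrm
  | .dneg F => Frm.neg F.toFrm
  | .xneg F => .xneg F.toFrm

/-- Uniform substitution `φ[α/p]`. -/
noncomputable def Frm.subst (p : At) (α : Frm At) : Frm At → Frm At
  | .atom q => if q = p then α else .atom q
  | .bot => .bot
  | .conj φ ψ => .conj (Frm.subst p α φ) (Frm.subst p α ψ)
  | .disj φ ψ => .disj (Frm.subst p α φ) (Frm.subst p α ψ)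
  | .impl φ ψ => .impl (Frm.subst p α φ) (Frm.subst p α ψ)
  | .xneg φ => .xneg (Frm.subst p α φ)

/-- A formula contains no explicit negation. -/
def NoXneg : Frm At → Prop
  | .atom _ => True
  | .bot => True
  | .conj φ ψ => NoXneg φ ∧ NoXneg ψ
  | .disj φ ψ => NoXneg φ ∧ NoXneg ψ
  | .impl φ ψ => NoXneg φ ∧ NoXneg ψ
  | .xneg _ => False

/-- HT satisfaction for (∼-free) formulas; the `∼` clause is a dummy. -/
def HTSat : Set At → Set At → Frm At → Prop
  | H, _, .atom p => p ∈ H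
  | _, _, .bot => False
  | H, T, .conj φ ψ => HTSat H T φ ∧ HTSat H T ψ
  | H, T, .disj φ ψ => HTSat H T φ ∨ HTSat H T ψ
  | H, T, .impl φ ψ => (HTSat H T φ → HTSat H T ψ) ∧ (HTSat T T φ → HTSat T T ψ)
  | _, _, .xneg _ => False

/-- HT validity for ∼-free formulas. -/
def HTValid (φ : Frm At) : Prop :=
  ∀ H T : Set At, H ⊆ T → HTSat H T φ

/-- Atom `p` occurs in a formula. -/
def Frm.occurs (p : At) : Frm At → Prop
  | .atom q => q = p
  | .bot => False
  | .conj φ ψ => Frm.occurs p φ ∨ Frm.occurs p ψ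
  | .disj φ ψ => Frm.occurs p φ ∨ Frm.occurs p ψ
  | .impl φ ψ => Frm.occurs p φ ∨ Frm.occurs p ψ
  | .xneg φ => Frm.occurs p φ

/-- Atom `p` occurs only outside the scope of explicit negation `∼`. -/
def OutsideXneg (p : At) : Frm At → Prop
  | .atom _ => True
  | .bot => True
  | .conj φ ψ => OutsideXneg p φ ∧ OutsideXneg p ψ
  | .disj φ ψ => OutsideXneg p φ ∧ OutsideXneg p ψ
  | .impl φ ψ => OutsideXneg p φ ∧ OutsideXneg p ψ
  | .xneg φ => ¬ Frm.occurs p φ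

/-- A rule `F → G` of a program. -/
abbrev Rule (At : Type) := NExp At × NExp At

/-- `T` is a model of a program: it satisfies the head whenever it satisfies the body. -/
def NModels (T : Set (XLit At)) (Prog : Set (Rule At)) : Prop :=
  ∀ r ∈ Prog, NExp.sat T r.1 → NExp.sat T r.2

/-- The reduct `Π^T` of a program. -/
noncomputable def progReduct (T : Set (XLit At)) (Prog : Set (Rule At)) : Set (Rule At) :=
  (fun r : Rule At => (NExp.reduct T r.1, NExp.reduct T r.2)) '' Prog

/-- `T` is an answer set of `Π`: a ⊆-minimal (consistent) model of the reduct `Π^T`. -/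
def AnswerSet (Prog : Set (Rule At)) (T : Set (XLit At)) : Prop :=
  Consistent T ∧ NModels T (progReduct T Prog) ∧
    ∀ T' : Set (XLit At), Consistent T' → T' ⊆ T → NModels T' (progReduct T Prog) → T' = T

/-- The theory corresponding to a program: each rule `F → G` read as an implication. -/
def ruleTheory (Prog : Set (Rule At)) : Set (Frm At) :=
  (fun r : Rule At => Frm.impl r.1.toFrm r.2.toFrm) '' Prog

/-- `⟨T,T⟩` is an equilibrium model of the theory `Γ`. -/
def EqModel (Γ : Set (Frm At)) (T : Set (XLit At)) : Prop :=
  Consistent T ∧ (∀ φ ∈ Γ, Sat T T φ) ∧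
    ¬ ∃ H : Set (XLit At), Consistent H ∧ H ⊂ T ∧ ∀ φ ∈ Γ, Sat H T φ

mutual
/-- Generalized Ferraris reduct `φ^T₊` of a formula (a nested expression). -/
noncomputable def redPos (T : Set (XLit At)) : Frm At → NExp At
  | .atom p => if XLit.pos p ∈ T then .atom p else .bot
  | .bot => .bot
  | .conj α β => if Sat T T (Frm.conj α β) then .conj (redPos T α) (redPos T β) else .bot
  | .disj α β => if Sat T T (Frm.disj α β) then .disj (redPos T α) (redPos T β) else .bot
  | .impl α β => if Sat T T (Frm.impl α β) then .disj (.dneg (redPos T α)) (redPos T β) else .bot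
  | .xneg α => if Sat T T (Frm.xneg α) then .xneg (redNeg T α) else .bot

/-- Generalized Ferraris reduct `φ^T₋` of a formula (a nested expression). -/
noncomputable def redNeg (T : Set (XLit At)) : Frm At → NExp At
  | .atom p => if XLit.neg p ∈ T then .atom p else .top
  | .bot => .bot
  | .conj α β => if Fals T T (Frm.conj α β) then .conj (redNeg T α) (redNeg T β) else .top
  | .disj α β => if Fals T T (Frm.disj α β) then .disj (redNeg T α) (redNeg T β) else .top
  | .impl α β => if Fals T T (Frm.impl α β) then redNeg T β else .top
  | .xneg α => if Fals T T (Frm.xneg α) then .xneg (redPos T α) else .top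
end

mutual
/-- Generalized Ferraris reduct `F^T₊` of a nested expression. -/
noncomputable def nRedPos (T : Set (XLit At)) : NExp At → NExp At
  | .top => .top
  | .bot => .bot
  | .atom p => if XLit.pos p ∈ T then .atom p else .bot
  | .conj α β => if NExp.sat T (NExp.conj α β) then .conj (nRedPos T α) (nRedPos T β) else .bot
  | .disj α β => if NExp.sat T (NExp.disj α β) then .disj (nRedPos T α) (nRedPos T β) else .bot
  | .dneg α => if NExp.sat T (NExp.dneg α) then .dneg (nRedPos T α) else .bot
  | .xneg α => if NExp.sat T (NExp.xneg α) then .xneg (nRedNeg T α) else .bot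

/-- Generalized Ferraris reduct `F^T₋` of a nested expression. -/
noncomputable def nRedNeg (T : Set (XLit At)) : NExp At → NExp At
  | .top => .top
  | .bot => .bot
  | .atom p => if XLit.neg p ∈ T then .atom p else .top
  | .conj α β => if NExp.fals T (NExp.conj α β) then .conj (nRedNeg T α) (nRedNeg T β) else .top
  | .disj α β => if NExp.fals T (NExp.disj α β) then .disj (nRedNeg T α) (nRedNeg T β) else .top
  | .dneg α => if NExp.fals T (NExp.dneg α) then .bot else .top
  | .xneg α => if NExp.fals T (NExp.xneg α) then .xneg (nRedPos T α) else .top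
end

/-- The five-valued valuation `M(φ)` of `M = ⟨H,T⟩`. -/
noncomputable def val (H T : Set (XLit At)) : Frm At → ℤ
  | .atom p =>
      if XLit.pos p ∈ H then 2
      else if XLit.neg p ∈ H then -2
      else if XLit.pos p ∈ T then 1
      else if XLit.neg p ∈ T then -1
      else 0
  | .bot => -2
  | .conj φ ψ => min (val H T φ) (val H T ψ)
  | .disj φ ψ => max (val H T φ) (val H T ψ)
  | .impl φ ψ => if val H T φ ≤ max (val H T ψ) 0 then 2 else val H T ψ
  | .xneg φ => - val H T φ


/-! Both equivalences are proved by one induction on `F`, since `∼` exchanges satisfaction and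
falsification. The only case in which `T` matters is `¬F`: by persistence `⟨H,T⟩ ⊨ ¬F` depends
on `⟨T,T⟩` alone, where X5 satisfaction agrees with satisfaction by `T`; the reduct evaluates
`¬F` at `T` as well. -/

section Persistence

variable {H T : Set (XLit At)}

mutual

theorem Sat.persist (hsub : H ⊆ T) : {φ : Frm At} → Sat H T φ → Sat T T φ
  | .atom _, h => hsub h
  | .conj _ _, h => ⟨h.1.persist hsub, h.2.persist hsub⟩
  | .disj _ _, h => h.imp (·.persist hsub) (·.persist hsub)
  | .impl _ _, h => ⟨h.2, h.2⟩
  | .xneg _, h => Fals.persist hsub h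

theorem Fals.persist (hsub : H ⊆ T) : {φ : Frm At} → Fals H T φ → Fals T T φ
  | .atom _, h => hsub h
  | .bot, h => h
  | .conj _ _, h => h.imp (·.persist hsub) (·.persist hsub)
  | .disj _ _, h => ⟨h.1.persist hsub, h.2.persist hsub⟩
  | .impl _ _, h => ⟨h.1, h.2.persist hsub⟩
  | .xneg _, h => Sat.persist hsub h

end

end Persistence

section Negation

variable {H T : Set (XLit At)}

theorem sat_neg_iff (hsub : H ⊆ T) {φ : Frm At} : Sat H T φ.neg ↔ ¬ Sat T T φ :=
  ⟨fun h => h.2, fun h => ⟨fun hφ => h (hφ.persist hsub), h⟩⟩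

theorem fals_neg_iff {φ : Frm At} : Fals H T φ.neg ↔ Sat T T φ :=
  and_iff_left trivial

theorem sat_top : Sat H T (Frm.top : Frm At) :=
  ⟨id, id⟩

theorem not_fals_top : ¬ Fals H T (Frm.top : Frm At) :=
  fun h => h.1

theorem NExp.sat_reduct_dneg_iff {F : NExp At} :
    NExp.sat H (NExp.reduct T F.dneg) ↔ ¬ NExp.sat T F := by
  by_cases h : NExp.sat T F <;> simp [NExp.reduct, NExp.sat, h]

theorem NExp.fals_reduct_dneg_iff {F : NExp At} :
    NExp.fals H (NExp.reduct T F.dneg) ↔ NExp.sat T F := by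
  by_cases h : NExp.sat T F <;> simp [NExp.reduct, NExp.fals, h]

end Negation

section Total

variable (T : Set (XLit At))

mutual

theorem sat_self_toFrm_iff : (F : NExp At) → (Sat T T F.toFrm ↔ NExp.sat T F)
  | .top => iff_true_intro sat_top
  | .bot => Iff.rfl
  | .atom _ => Iff.rfl
  | .conj F G => and_congr (sat_self_toFrm_iff F) (sat_self_toFrm_iff G)
  | .disj F G => or_congr (sat_self_toFrm_iff F) (sat_self_toFrm_iff G)
  | .dneg F => (sat_neg_iff Set.Subset.rfl).trans (not_congr (sat_self_toFrm_iff F))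
  | .xneg F => fals_self_toFrm_iff F

theorem fals_self_toFrm_iff : (F : NExp At) → (Fals T T F.toFrm ↔ NExp.fals T F)
  | .top => iff_false_intro not_fals_top
  | .bot => Iff.rfl
  | .atom _ => Iff.rfl
  | .conj F G => or_congr (fals_self_toFrm_iff F) (fals_self_toFrm_iff G)
  | .disj F G => and_congr (fals_self_toFrm_iff F) (fals_self_toFrm_iff G)
  | .dneg F => fals_neg_iff.trans (sat_self_toFrm_iff F)
  | .xneg F => sat_self_toFrm_iff F

end

end Total

theorem stmt5_general {H T : Set (XLit At)} (hsub : H ⊆ T) (F : NExp At) :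
    (Sat H T F.toFrm ↔ NExp.sat H (NExp.reduct T F)) ∧
    (Fals H T F.toFrm ↔ NExp.fals H (NExp.reduct T F)) := by
  induction F with
  | top => exact ⟨iff_true_intro sat_top, iff_false_intro not_fals_top⟩
  | bot => exact ⟨Iff.rfl, Iff.rfl⟩
  | atom p => exact ⟨Iff.rfl, Iff.rfl⟩
  | conj F G ihF ihG => exact ⟨and_congr ihF.1 ihG.1, or_congr ihF.2 ihG.2⟩
  | disj F G ihF ihG => exact ⟨or_congr ihF.1 ihG.1, and_congr ihF.2 ihG.2⟩
  | dneg F =>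
    have total : Sat T T F.toFrm ↔ NExp.sat T F := sat_self_toFrm_iff T F
    constructor
    · calc Sat H T F.toFrm.neg
        _ ↔ ¬ Sat T T F.toFrm := sat_neg_iff hsub
        _ ↔ ¬ NExp.sat T F := not_congr total
        _ ↔ NExp.sat H (NExp.reduct T F.dneg) := NExp.sat_reduct_dneg_iff.symm
    · calc Fals H T F.toFrm.neg
        _ ↔ Sat T T F.toFrm := fals_neg_iff
        _ ↔ NExp.sat T F := total
        _ ↔ NExp.fals H (NExp.reduct T F.dneg) := NExp.fals_reduct_dneg_iff.symm
  | xneg F ih => exact ih.symm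

/-- for any X5-interpretation `⟨H,T⟩` and nested expression `F`:
(i) `⟨H,T⟩ ⊨ F` iff `H ⊨ F^T`; (ii) `⟨H,T⟩ ⫤ F` iff `H ⫤ F^T`. -/
theorem stmt5 (At : Type) (H T : Set (XLit At))
    (hH : Consistent H) (hT : Consistent T) (hsub : H ⊆ T) (F : NExp At) :
    (Sat H T F.toFrm ↔ NExp.sat H (NExp.reduct T F)) ∧
    (Fals H T F.toFrm ↔ NExp.fals H (NExp.reduct T F)) :=
  stmt5_general hsub F

end X5Paper
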